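/- Let V be a rooted directed tree with root v0 and μ=(μ_v)_{v∈V} a weight of nonzero scalars. Let 1<p<∞ with conjugate exponent p*, and suppose ∑_{u∈Chi(v)}|μ_u|^{-p*}<∞ for all v∈V (i.e., the unweighted backward shift B is defined on ℓ^p(V,μ)). Let 𝒥 be the set of all backward invariant sequences f on V with f(v0)=1. Then: (a) inf_{f∈𝒥}(∑_{v∈V}|f(v)μ_v|^p)^{1/p} = r_p(V,μ) and inf_{f∈𝒥}(∑_{v∈V,v≠v0}|f(v)μ_v|^p)^{1/p} = c_p(V,μ). (b) If r_p(V,μ)<∞ (equivalently c_p(V,μ)<∞), then there exists a unique backward invariant sequence f∈ℓ^p(V,μ) with f(v0)=1 attaining these infima; it is given, for v=v_n∈gen_n with path (v0,v1,…,v_n) from v0 to v_n, by f(v)=∏_{k=1}^n [r_p(V(v_k),μ)^{-p*} / ∑_{u∈Chi(par(v_k))} r_p(V(u),μ)^{-p*}] > 0 if r_p(V(v),μ)<∞, and f(v)=0 if r_p(V(v),μ)=∞. -/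

import Mathlib

open scoped ENNReal NNReal Topology Classical
open Filter

namespace PaperTree

/-! ### Directed trees -/

variable {V : Type*}

/-- Iterated parent map of a directed tree given by a parent function. -/
def parIter (par : V → Option V) : ℕ → V → Option V
  | 0, v => some v
  | n + 1, v => (par v).bind (parIter par n)

/-- `par` is the parent function of a (countable, connected, acyclic) directed tree on `V`,
in which every vertex has at most one parent and at most one vertex (the root) has none. -/
structure IsDirectedTree (par : V → Option V) : Prop where
  countable : Countable V
  acyclic : ∀ (v : V) (n : ℕ), 0 < n → parIter par n v ≠ some v
  connected : ∀ u v : V, ∃ (m n : ℕ) (w : V), parIter par m u = some w ∧ parIter par n v = some w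
  root_unique : ∀ u v : V, par u = none → par v = none → u = v

/-- The set of children of `v`. -/
def children (par : V → Option V) (v : V) : Set V := {u : V | par u = some v}

/-- The set of descendants of `v` (including `v`); the rooted subtree `V(v)`. -/
def descendants (par : V → Option V) (v : V) : Set V := {u : V | ∃ n : ℕ, parIter par n u = some v}

def IsLeafV (par : V → Option V) (v : V) : Prop := children par v = ∅

def Leafless (par : V → Option V) : Prop := ∀ v : V, children par v ≠ ∅

def IsRoot (par : V → Option V) (v : V) : Prop := par v = none

def Rooted (par : V → Option V) : Prop := ∃ v : V, IsRoot par v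

def Unrooted (par : V → Option V) : Prop := ∀ v : V, par v ≠ none

/-- The tree has a free left end: some vertex all of whose (proper) ancestors
have exactly one child. -/
def HasFreeLeftEnd (par : V → Option V) : Prop :=
  ∃ v : V, ∀ n : ℕ, 1 ≤ n → ∀ w : V, parIter par n v = some w → ∃! u : V, u ∈ children par w

/-- The tree has finite length (all branches have uniformly bounded length). -/
def FiniteLength (par : V → Option V) : Prop := ∃ m : ℕ, ∀ u : V, parIter par (m + 1) u = none

/-- Product of the weights along the upward path of length `n` ending at `u`;
for `u ∈ Chi^n(v)` this is `λ(v → u)`, and `pathProd par lam n v = λ(par^n(v) → v)`. -/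
def pathProd {𝕜 : Type*} [Monoid 𝕜] (par : V → Option V) (lam : V → 𝕜) : ℕ → V → 𝕜
  | 0, _ => 1
  | n + 1, u => lam u * ((par u).elim 1 (pathProd par lam n))

/-- A (finite or infinite, maximal) branch starting at `v`, encoded with `Option`. -/
def IsOptBranch (par : V → Option V) (v : V) (b : ℕ → Option V) : Prop :=
  b 0 = some v ∧
  (∀ (k : ℕ) (w : V), b k = some w →
      (children par w = ∅ ∧ b (k + 1) = none) ∨ ∃ u ∈ children par w, b (k + 1) = some u) ∧
  ∀ k : ℕ, b k = none → b (k + 1) = none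

/-- An infinite branch starting at `v` (adequate for leafless trees). -/
def IsBranch (par : V → Option V) (v : V) (b : ℕ → V) : Prop :=
  b 0 = v ∧ ∀ k : ℕ, b (k + 1) ∈ children par (b k)

/-- The `[0,∞]`-valued absolute weight associated with a scalar weight. -/
noncomputable def nw {𝕜 : Type*} [RCLike 𝕜] (μ : V → 𝕜) : V → ℝ≥0∞ := fun v => (‖μ v‖₊ : ℝ≥0∞)

/-! ### Fixed points over subtrees and backward invariant sequences -/

section Invariance

variable {𝕜 : Type*} [RCLike 𝕜] {V : Type*}

/-- The restriction of `g` to the subtree `W` is a fixed point of the weighted backward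
shift over `W`: `g w = ∑_{u ∈ Chi(w) ∩ W} λ_u g u` (unconditionally) for every `w ∈ W`. -/
def FixedPtOver (par : V → Option V) (lam : V → 𝕜) (g : V → 𝕜) (W : Set V) : Prop :=
  ∀ w ∈ W, HasSum (fun u : ↥(children par w ∩ W) => lam u.1 * g u.1) (g w)

/-- `g` is backward invariant with respect to the children map `chi`:
`g v = ∑_{u ∈ chi v} g u` (unconditionally) for every non-leaf `v`. -/
def BackwardInv (chi : V → Set V) (g : V → 𝕜) : Prop :=
  ∀ v : V, chi v ≠ ∅ → HasSum (fun u : ↥(chi v) => g u.1) (g v)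

/-- Backward invariance over a subtree `W` (with respect to the children map `chi`). -/
def BackwardInvOn (chi : V → Set V) (W : Set V) (g : V → 𝕜) : Prop :=
  ∀ w ∈ W, (chi w ∩ W).Nonempty → HasSum (fun u : ↥(chi w ∩ W) => g u.1) (g w)

/-- A scalar that is a (strictly) positive real. -/
def IsPosScalar {𝕜 : Type*} [RCLike 𝕜] (c : 𝕜) : Prop := ∃ r : ℝ, 0 < r ∧ c = (r : 𝕜)

end Invariance

/-! ### The generalized continued fractions `c_p` and resistances `r_p` -/

section Constants

/-- Conjugate exponent. -/
noncomputable def conjExp (p : ℝ) : ℝ := p / (p - 1)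

variable {V : Type*}

/-- `cpAux chi w p m v` is the continued fraction `c_p` of the subtree of descendants of `v`
(with respect to the children map `chi`) truncated at depth `m`, with weight `w`. -/
noncomputable def cpAux (chi : V → Set V) (w : V → ℝ≥0∞) (p : ℝ) : ℕ → V → ℝ≥0∞
  | 0, _ => 0
  | m + 1, v =>
      if chi v = ∅ then 0
      else (∑' u : ↥(chi v),
              (w u.1 ^ p + cpAux chi w p m u.1 ^ p) ^ (-(conjExp p / p))) ^ (-(1 / conjExp p))

/-- The continued fraction `c_p(V(v), w)` of order `1 < p < ∞`. -/
noncomputable def cpC (chi : V → Set V) (w : V → ℝ≥0∞) (p : ℝ) (v : V) : ℝ≥0∞ :=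
  ⨆ m : ℕ, cpAux chi w p m v

/-- The resistance `r_p(V(v), w)` of order `1 < p < ∞`. -/
noncomputable def rpC (chi : V → Set V) (w : V → ℝ≥0∞) (p : ℝ) (v : V) : ℝ≥0∞ :=
  (w v ^ p + cpC chi w p v ^ p) ^ (1 / p)

/-- Truncated continued fraction of order `p = ∞`. -/
noncomputable def cInfAux (chi : V → Set V) (w : V → ℝ≥0∞) : ℕ → V → ℝ≥0∞
  | 0, _ => 0
  | m + 1, v =>
      if chi v = ∅ then 0
      else (∑' u : ↥(chi v), (max (w u.1) (cInfAux chi w m u.1))⁻¹)⁻¹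

/-- The continued fraction `c_∞(V(v), w)`. -/
noncomputable def cInfC (chi : V → Set V) (w : V → ℝ≥0∞) (v : V) : ℝ≥0∞ :=
  ⨆ m : ℕ, cInfAux chi w m v

/-- The resistance `r_∞(V(v), w)`. -/
noncomputable def rInfC (chi : V → Set V) (w : V → ℝ≥0∞) (v : V) : ℝ≥0∞ :=
  max (w v) (cInfC chi w v)

end Constants

/-! ### Weighted `ℓ^p`- and sup-norms on subsets of vertices -/

section Norms

variable {𝕜 : Type*} [RCLike 𝕜] {V : Type*}

/-- `(∑_{v ∈ S} (|g v| w v)^p)^{1/p}` in `[0,∞]`. -/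
noncomputable def lpSumOn (w : V → ℝ≥0∞) (p : ℝ) (S : Set V) (g : V → 𝕜) : ℝ≥0∞ :=
  (∑' v : ↥S, ((‖g v.1‖₊ : ℝ≥0∞) * w v.1) ^ p) ^ (1 / p)

/-- `sup_{v ∈ S} |g v| w v` in `[0,∞]`. -/
noncomputable def supNormOn (w : V → ℝ≥0∞) (S : Set V) (g : V → 𝕜) : ℝ≥0∞ :=
  ⨆ v : ↥S, (‖g v.1‖₊ : ℝ≥0∞) * w v.1

end Norms


section Aux

theorem conj_holder {p : ℝ} (hp : 1 < p) : p.HolderConjugate (conjExp p) :=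
  Real.HolderConjugate.conjExponent hp

theorem cpAux_mono_succ (chi : V → Set V) (w : V → ℝ≥0∞) (p : ℝ) (hp : 1 < p) (m : ℕ) :
    ∀ v, cpAux chi w p m v ≤ cpAux chi w p (m + 1) v := by
  have hq := (conj_holder hp).symm.pos
  have hp0 : 0 < p := by linarith
  induction m with
  | zero => intro v; simp [cpAux]
  | succ m ih =>
    intro v
    rw [cpAux, cpAux]
    split_ifs with h
    · exact le_rfl
    · rw [ENNReal.rpow_neg, ENNReal.rpow_neg]
      refine ENNReal.inv_le_inv.2 (ENNReal.rpow_le_rpow ?_ (by positivity))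
      refine ENNReal.tsum_le_tsum fun u => ?_
      rw [ENNReal.rpow_neg, ENNReal.rpow_neg]
      refine ENNReal.inv_le_inv.2 (ENNReal.rpow_le_rpow ?_ (by positivity))
      gcongr
      exact ih u.1

theorem cpAux_tendsto (chi : V → Set V) (w : V → ℝ≥0∞) (p : ℝ) (hp : 1 < p) (v : V) :
    Tendsto (fun m => cpAux chi w p m v) atTop (𝓝 (cpC chi w p v)) :=
  tendsto_atTop_iSup (monotone_nat_of_le_succ fun m => cpAux_mono_succ chi w p hp m v)

theorem cpAux_ne_top (chi : V → Set V) (w : V → ℝ≥0∞) (p : ℝ) (hp : 1 < p)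
    (hw : ∀ v, w v ≠ ⊤) (m : ℕ) :
    ∀ v, cpAux chi w p m v ≠ ⊤ := by
  have hq := (conj_holder hp).symm.pos
  have hp0 : 0 < p := by linarith
  induction m with
  | zero => intro v; simp [cpAux]
  | succ m ih =>
    intro v
    rw [cpAux]
    split_ifs with h
    · simp
    · rw [ENNReal.rpow_neg]
      simp only [ne_eq, ENNReal.inv_eq_top]
      rw [ENNReal.rpow_eq_zero_iff_of_pos (by positivity)]
      rw [ENNReal.tsum_eq_zero]
      push Not
      obtain ⟨u, hu⟩ := Set.nonempty_iff_ne_empty.2 h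
      refine ⟨⟨u, hu⟩, ?_⟩
      rw [ENNReal.rpow_neg]
      simp only [ne_eq, ENNReal.inv_eq_zero]
      refine ENNReal.rpow_ne_top_of_nonneg (by positivity) ?_
      exact ENNReal.add_ne_top.2 ⟨ENNReal.rpow_ne_top_of_nonneg hp0.le (hw u),
        ENNReal.rpow_ne_top_of_nonneg hp0.le (ih u)⟩

theorem term_le (w c : ℝ≥0∞) (p : ℝ) (hp : 1 < p) :
    (w ^ p + c ^ p) ^ (-(conjExp p / p)) ≤ w ^ (-(conjExp p)) := by
  have hq := (conj_holder hp).symm.pos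
  have hp0 : 0 < p := by linarith
  have : w ^ (-(conjExp p)) = (w ^ p) ^ (-(conjExp p / p)) := by
    rw [← ENNReal.rpow_mul]; congr 1; field_simp
  rw [this, ENNReal.rpow_neg, ENNReal.rpow_neg]
  refine ENNReal.inv_le_inv.2 (ENNReal.rpow_le_rpow ?_ (by positivity))
  exact le_self_add

theorem rpC_pow (chi : V → Set V) (w : V → ℝ≥0∞) (p : ℝ) (hp : 1 < p) (v : V) :
    rpC chi w p v ^ p = w v ^ p + cpC chi w p v ^ p := by
  have hp0 : 0 < p := by linarith
  rw [rpC, ← ENNReal.rpow_mul]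
  rw [one_div_mul_cancel hp0.ne', ENNReal.rpow_one]

theorem rpC_neg (chi : V → Set V) (w : V → ℝ≥0∞) (p : ℝ) (v : V) :
    rpC chi w p v ^ (-(conjExp p)) = (w v ^ p + cpC chi w p v ^ p) ^ (-(conjExp p / p)) := by
  rw [rpC, ← ENNReal.rpow_mul]
  congr 1; ring

theorem sum_r_ne_top (chi : V → Set V) (w : V → ℝ≥0∞) (p : ℝ) (hp : 1 < p) (v : V)
    (hdef : (∑' u : ↥(chi v), w u.1 ^ (-(conjExp p))) < ⊤) :
    (∑' u : ↥(chi v), rpC chi w p u.1 ^ (-(conjExp p))) ≠ ⊤ := by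
  refine ne_top_of_le_ne_top hdef.ne (ENNReal.tsum_le_tsum fun u => ?_)
  rw [rpC_neg]
  exact term_le _ _ p hp

theorem cpC_eq (chi : V → Set V) (w : V → ℝ≥0∞) (p : ℝ) (hp : 1 < p) (v : V)
    (hdef : (∑' u : ↥(chi v), w u.1 ^ (-(conjExp p))) < ⊤) (hv : chi v ≠ ∅) :
    cpC chi w p v =
      (∑' u : ↥(chi v), rpC chi w p u.1 ^ (-(conjExp p))) ^ (-(1 / conjExp p)) := by
  have h1 := (cpAux_tendsto chi w p hp v).comp (tendsto_add_atTop_nat 1)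
  refine tendsto_nhds_unique h1 ?_
  have : ∀ m, ((fun m => cpAux chi w p m v) ∘ fun a => a + 1) m = (∑' u : ↥(chi v),
      (w u.1 ^ p + cpAux chi w p m u.1 ^ p) ^ (-(conjExp p / p))) ^ (-(1 / conjExp p)) := by
    intro m
    simp [cpAux, hv]
  rw [tendsto_congr this]
  refine (ENNReal.continuous_rpow_const.tendsto _).comp ?_
  let _ : MeasurableSpace ↥(chi v) := ⊤
  have hm : ∀ f : ↥(chi v) → ℝ≥0∞, Measurable f := fun f => measurable_from_top
  simp_rw [← fun f => MeasureTheory.lintegral_count' (hm f)]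
  refine MeasureTheory.tendsto_lintegral_of_dominated_convergence
    (fun u : ↥(chi v) => w u.1 ^ (-(conjExp p))) (fun n => hm _) ?_ ?_ ?_
  · intro n
    exact Filter.Eventually.of_forall fun u => term_le _ _ p hp
  · rw [MeasureTheory.lintegral_count' (hm _)]; exact hdef.ne
  · refine Filter.Eventually.of_forall fun u => ?_
    rw [rpC_neg]
    refine (ENNReal.continuous_rpow_const.tendsto _).comp ?_
    refine tendsto_const_nhds.add ?_
    exact (ENNReal.continuous_rpow_const.tendsto _).comp (cpAux_tendsto chi w p hp u.1)

theorem cpC_leaf (chi : V → Set V) (w : V → ℝ≥0∞) (p : ℝ) (v : V) (hv : chi v = ∅) :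
    cpC chi w p v = 0 := by
  rw [cpC]
  simp only [ENNReal.iSup_eq_zero]
  intro m
  cases m <;> simp [cpAux, hv]

theorem holder_ennreal {ι : Type*} (f g : ι → ℝ≥0∞) {p q : ℝ} (hpq : p.HolderConjugate q) :
    ∑' i, f i * g i ≤ (∑' i, f i ^ p) ^ (1 / p) * (∑' i, g i ^ q) ^ (1 / q) := by
  let _ : MeasurableSpace ι := ⊤
  have hm : ∀ f : ι → ℝ≥0∞, Measurable f := fun f => measurable_from_top
  have := ENNReal.lintegral_mul_le_Lp_mul_Lq (MeasureTheory.Measure.count) hpq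
    (hm f).aemeasurable (hm g).aemeasurable
  simp only [MeasureTheory.lintegral_count' (hm _)] at this
  exact this

theorem holder_step (chi : V → Set V) (w : V → ℝ≥0∞) (p : ℝ) (hp : 1 < p)
    (hw : ∀ v, w v ≠ ⊤) (hw0 : ∀ v, w v ≠ 0) (m : ℕ) (v : V)
    (hdef : (∑' u : ↥(chi v), w u.1 ^ (-(conjExp p))) < ⊤) (a : V → ℝ≥0∞)
    (ha : chi v ≠ ∅ → a v ≤ ∑' u : ↥(chi v), a u.1) :
    a v ^ p * cpAux chi w p (m + 1) v ^ p ≤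
      ∑' u : ↥(chi v), a u.1 ^ p * (w u.1 ^ p + cpAux chi w p m u.1 ^ p) := by
  have hpq := conj_holder hp
  have hq := hpq.symm.pos
  have hp0 : 0 < p := by linarith
  have hfin := cpAux_ne_top chi w p hp hw (m + 1) v
  rw [cpAux] at hfin ⊢
  split_ifs with h
  · simp [hp0]
  rw [if_neg h] at hfin
  set R : ↥(chi v) → ℝ≥0∞ := fun u => w u.1 ^ p + cpAux chi w p m u.1 ^ p with hR
  have hR0 : ∀ u, R u ≠ 0 := by
    intro u hu
    simp only [hR, add_eq_zero, ENNReal.rpow_eq_zero_iff_of_pos hp0] at hu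
    exact hw0 _ hu.1
  have hRt : ∀ u, R u ≠ ⊤ := fun u => ENNReal.add_ne_top.2
    ⟨ENNReal.rpow_ne_top_of_nonneg hp0.le (hw u),
      ENNReal.rpow_ne_top_of_nonneg hp0.le (cpAux_ne_top chi w p hp hw m u)⟩
  change a v ^ p * ((∑' u, R u ^ (-(conjExp p / p))) ^ (-(1 / conjExp p))) ^ p ≤ ∑' u, a u.1 ^ p * R u
  change (∑' u, R u ^ (-(conjExp p / p))) ^ (-(1 / conjExp p)) ≠ ⊤ at hfin
  set S := ∑' u, R u ^ (-(conjExp p / p)) with hS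
  have hSt : S ≠ ⊤ := ne_top_of_le_ne_top hdef.ne (ENNReal.tsum_le_tsum fun u => term_le _ _ p hp)
  have hS0 : S ≠ 0 := by
    intro h0
    rw [h0, ENNReal.zero_rpow_of_neg (by simp [hq])] at hfin
    exact hfin rfl
  have h1 := holder_ennreal (fun u : ↥(chi v) => a u.1 * R u ^ (1 / p)) (fun u => R u ^ (-(1 / p))) hpq
  have e1 : ∀ u : ↥(chi v), a u.1 * R u ^ (1 / p) * R u ^ (-(1 / p)) = a u.1 := by
    intro u
    rw [mul_assoc, ← ENNReal.rpow_add _ _ (hR0 u) (hRt u), add_neg_cancel, ENNReal.rpow_zero, mul_one]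
  have e2 : ∀ u : ↥(chi v), (a u.1 * R u ^ (1 / p)) ^ p = a u.1 ^ p * R u := by
    intro u
    rw [ENNReal.mul_rpow_of_nonneg _ _ hp0.le, ← ENNReal.rpow_mul, one_div_mul_cancel hp0.ne',
      ENNReal.rpow_one]
  have e3 : ∀ u : ↥(chi v), (R u ^ (-(1 / p))) ^ conjExp p = R u ^ (-(conjExp p / p)) := by
    intro u
    rw [← ENNReal.rpow_mul]; congr 1; ring
  simp_rw [e1, e2, e3, ← hS] at h1
  have h2 := (ha h).trans h1
  have h3 : a v * S ^ (-(1 / conjExp p)) ≤ (∑' u : ↥(chi v), a u.1 ^ p * R u) ^ (1 / p) := by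
    calc _ ≤ (∑' u : ↥(chi v), a u.1 ^ p * R u) ^ (1 / p) * S ^ (1 / conjExp p) * S ^ (-(1 / conjExp p)) := by
          gcongr
      _ = _ := by
          rw [mul_assoc, ← ENNReal.rpow_add _ _ hS0 hSt, add_neg_cancel, ENNReal.rpow_zero, mul_one]
  have h4 := ENNReal.rpow_le_rpow h3 hp0.le
  rw [ENNReal.mul_rpow_of_nonneg _ _ hp0.le] at h4
  refine h4.trans_eq ?_
  rw [← ENNReal.rpow_mul, one_div_mul_cancel hp0.ne', ENNReal.rpow_one]

/-- generation sums -/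
noncomputable def genSum (par : V → Option V) (h : V → ℝ≥0∞) (n : ℕ) (v : V) : ℝ≥0∞ :=
  ∑' x, if parIter par n x = some v then h x else 0

theorem parIter_succ' (par : V → Option V) (n : ℕ) :
    ∀ x, parIter par (n + 1) x = (parIter par n x).bind par := by
  induction n with
  | zero => intro x; cases h : par x <;> simp [parIter, h]
  | succ n ih =>
    intro x
    rw [parIter]
    cases h : par x with
    | none => simp [parIter, h]
    | some y => simp only [Option.bind_some]; rw [ih y, parIter, h]; rfl

theorem genSum_zero (par : V → Option V) (h : V → ℝ≥0∞) (v : V) : genSum par h 0 v = h v := by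
  rw [genSum, tsum_eq_single v]
  · simp [parIter]
  · intro x hx; simp [parIter, hx]

theorem genSum_succ (par : V → Option V) (h : V → ℝ≥0∞) (n : ℕ) (v : V) :
    genSum par h (n + 1) v = ∑' u : ↥(children par v), genSum par h n u.1 := by
  simp only [genSum]
  rw [ENNReal.tsum_comm]
  congr 1; ext x
  rw [parIter_succ']
  cases hx : parIter par n x with
  | none => simp
  | some y =>
    simp only [Option.bind_some, Option.some.injEq]
    split_ifs with hy
    · rw [tsum_eq_single ⟨y, hy⟩]
      · simp
      · intro b hb
        rw [if_neg]
        rintro rfl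
        exact hb rfl
    · symm
      rw [ENNReal.tsum_eq_zero]
      intro u
      rw [if_neg]
      rintro rfl
      exact hy u.2

noncomputable def enSum (par : V → Option V) (h : V → ℝ≥0∞) (m : ℕ) (v : V) : ℝ≥0∞ :=
  ∑ n ∈ Finset.range m, genSum par h (n + 1) v

theorem enSum_succ (par : V → Option V) (h : V → ℝ≥0∞) (m : ℕ) (v : V) :
    enSum par h (m + 1) v = ∑' u : ↥(children par v), (h u.1 + enSum par h m u.1) := by
  rw [enSum]
  simp_rw [genSum_succ]
  rw [← Summable.tsum_finsetSum (fun _ _ => ENNReal.summable)]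
  congr 1; ext u
  rw [Finset.sum_range_succ', genSum_zero, add_comm]; rfl

theorem exists_depth (par : V → Option V) (hTree : IsDirectedTree par) (root : V)
    (hroot : IsRoot par root) : ∃ d : V → ℕ, ∀ x n, parIter par n x = some root ↔ n = d x := by
  have hr : ∀ n, parIter par (n + 1) root = none := by
    intro n; rw [parIter, show par root = none from hroot]; rfl
  have hadd : ∀ k n x, parIter par n x = some root → parIter par (n + k + 1) x = none := by
    intro k n x hx
    induction k with
    | zero => rw [add_zero, parIter_succ', hx]; exact hroot
    | succ k ih => rw [parIter_succ', ← add_assoc, ih]; rfl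
  have hex : ∀ x, ∃ n, parIter par n x = some root := by
    intro x
    obtain ⟨m, n, y, h1, h2⟩ := hTree.connected root x
    cases m with
    | zero => simp only [parIter, Option.some.injEq] at h1; exact ⟨n, h1 ▸ h2⟩
    | succ m => rw [hr] at h1; exact absurd h1 (by simp)
  choose d hd using hex
  refine ⟨d, fun x n => ⟨fun h => ?_, fun h => h ▸ hd x⟩⟩
  rcases lt_trichotomy n (d x) with hlt | heq | hlt
  · obtain ⟨k, hk⟩ := Nat.exists_eq_add_of_lt hlt
    have := hadd k n x h
    rw [← hk, hd x] at this; simp at this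
  · exact heq
  · obtain ⟨k, hk⟩ := Nat.exists_eq_add_of_lt hlt
    have := hadd k _ x (hd x)
    rw [← hk, h] at this; simp at this

theorem iSup_enSum (par : V → Option V) (hTree : IsDirectedTree par) (root : V)
    (hroot : IsRoot par root) (h : V → ℝ≥0∞) :
    ∑' x : ↥{v : V | v ≠ root}, h x.1 = ⨆ m, enSum par h m root := by
  obtain ⟨d, hd⟩ := exists_depth par hTree root hroot
  simp only [enSum]
  rw [← ENNReal.tsum_eq_iSup_nat, tsum_subtype {v : V | v ≠ root} h]
  simp only [genSum]
  rw [ENNReal.tsum_comm]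
  congr 1; ext x
  simp_rw [hd]
  by_cases hx : x = root
  · have : d x = 0 := ((hd x 0).1 (by simp [parIter, hx])).symm
    simp only [this]; simp [hx]
  · have h0 : d x ≠ 0 := by
      intro h0
      have := (hd x 0).2 h0.symm
      simp only [parIter, Option.some.injEq] at this
      exact hx this
    obtain ⟨k, hk⟩ := Nat.exists_eq_succ_of_ne_zero h0
    rw [tsum_eq_single k]
    · simp [hk, hx]
    · intro b hb
      rw [if_neg]
      omega

theorem tsum_univ_split (root : V) (h : V → ℝ≥0∞) :
    ∑' x : ↥(Set.univ : Set V), h x.1 = h root + ∑' x : ↥{v : V | v ≠ root}, h x.1 := by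
  rw [tsum_univ h, ENNReal.tsum_eq_add_tsum_ite root, tsum_subtype {v : V | v ≠ root} h]
  congr 2; ext x
  by_cases hx : x = root <;> simp [hx]

theorem lower_bound (par : V → Option V) (w : V → ℝ≥0∞) (p : ℝ) (hp : 1 < p)
    (hw : ∀ v, w v ≠ ⊤) (hw0 : ∀ v, w v ≠ 0)
    (hdef : ∀ v, (∑' u : ↥(children par v), w u.1 ^ (-(conjExp p))) < ⊤) (a : V → ℝ≥0∞)
    (ha : ∀ v, children par v ≠ ∅ → a v ≤ ∑' u : ↥(children par v), a u.1) (m : ℕ) :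
    ∀ v, a v ^ p * cpAux (children par) w p m v ^ p ≤ enSum par (fun u => (a u * w u) ^ p) m v := by
  have hp0 : 0 < p := by linarith
  induction m with
  | zero => intro v; simp [cpAux, hp0]
  | succ m ih =>
    intro v
    refine (holder_step (children par) w p hp hw hw0 m v (hdef v) a (ha v)).trans ?_
    rw [enSum_succ]
    refine ENNReal.tsum_le_tsum fun u => ?_
    rw [mul_add, ENNReal.mul_rpow_of_nonneg _ _ hp0.le]
    gcongr
    exact ih u.1

theorem lower_root (par : V → Option V) (hTree : IsDirectedTree par) (root : V)
    (hroot : IsRoot par root) (w : V → ℝ≥0∞) (p : ℝ) (hp : 1 < p)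
    (hw : ∀ v, w v ≠ ⊤) (hw0 : ∀ v, w v ≠ 0)
    (hdef : ∀ v, (∑' u : ↥(children par v), w u.1 ^ (-(conjExp p))) < ⊤) (a : V → ℝ≥0∞)
    (ha : ∀ v, children par v ≠ ∅ → a v ≤ ∑' u : ↥(children par v), a u.1) (h1 : a root = 1) :
    cpC (children par) w p root ^ p ≤ ∑' x : ↥{v : V | v ≠ root}, (a x.1 * w x.1) ^ p := by
  have hp0 : 0 < p := by linarith
  rw [iSup_enSum par hTree root hroot (fun u => (a u * w u) ^ p)]
  refine le_of_tendsto ((ENNReal.continuous_rpow_const.tendsto _).comp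
    (cpAux_tendsto (children par) w p hp root)) (Filter.Eventually.of_forall fun m => ?_)
  have := lower_bound par w p hp hw hw0 hdef a ha m root
  rw [h1, ENNReal.one_rpow, one_mul] at this
  exact this.trans (le_iSup (fun m => enSum par (fun u => (a u * w u) ^ p) m root) m)

theorem tree_induct (par : V → Option V) (hTree : IsDirectedTree par) (root : V)
    (hroot : IsRoot par root) (P : V → Prop) (h0 : P root)
    (hs : ∀ v y, par v = some y → P y → P v) : ∀ v, P v := by
  obtain ⟨d, hd⟩ := exists_depth par hTree root hroot
  have : ∀ n v, d v = n → P v := by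
    intro n
    induction n with
    | zero =>
      intro v hv
      have := (hd v 0).2 hv.symm
      simp only [parIter, Option.some.injEq] at this
      exact this ▸ h0
    | succ n ih =>
      intro v hv
      have := (hd v (n + 1)).2 hv.symm
      rw [parIter] at this
      cases hy : par v with
      | none => rw [hy] at this; simp at this
      | some y =>
        rw [hy] at this
        exact hs v y hy (ih y ((hd y n).1 this).symm)
  exact fun v => this _ v rfl

noncomputable def ratioF (par : V → Option V) (w : V → ℝ≥0∞) (p : ℝ) (v : V) : ℝ≥0∞ :=
  (par v).elim 1 fun y => rpC (children par) w p v ^ (-(conjExp p)) /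
    ∑' u : ↥(children par y), rpC (children par) w p u.1 ^ (-(conjExp p))

theorem exists_F (par : V → Option V) (hTree : IsDirectedTree par) (root : V)
    (hroot : IsRoot par root) (w : V → ℝ≥0∞) (p : ℝ) :
    ∃ F : V → ℝ≥0∞, F root = 1 ∧ ∀ v y, par v = some y →
      F v = rpC (children par) w p v ^ (-(conjExp p)) /
        (∑' u : ↥(children par y), rpC (children par) w p u.1 ^ (-(conjExp p))) * F y := by
  obtain ⟨d, hd⟩ := exists_depth par hTree root hroot
  refine ⟨fun v => pathProd par (ratioF par w p) (d v) v, ?_, ?_⟩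
  · have : d root = 0 := ((hd root 0).1 rfl).symm
    simp [this, pathProd]
  · intro v y hy
    have : d v = d y + 1 := by
      symm
      rw [← hd, parIter, hy, Option.bind_some, hd]
    simp only [this, pathProd, hy, Option.elim_some]
    simp [ratioF, hy]

theorem rpC_ne_top_iff (chi : V → Set V) (w : V → ℝ≥0∞) (p : ℝ) (hp : 1 < p)
    (hw : ∀ v, w v ≠ ⊤) (v : V) : rpC chi w p v ≠ ⊤ ↔ cpC chi w p v ≠ ⊤ := by
  have hp0 : 0 < p := by linarith
  have h1 : rpC chi w p v ≠ ⊤ ↔ rpC chi w p v ^ p ≠ ⊤ := by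
    simp [ENNReal.rpow_eq_top_iff_of_pos hp0]
  rw [h1, rpC_pow chi w p hp, ENNReal.add_ne_top]
  simp [ENNReal.rpow_eq_top_iff_of_pos hp0, hw v]

theorem rpC_ne_zero (chi : V → Set V) (w : V → ℝ≥0∞) (p : ℝ) (hp : 1 < p)
    (hw0 : ∀ v, w v ≠ 0) (v : V) : rpC chi w p v ≠ 0 := by
  have hp0 : 0 < p := by linarith
  intro h
  have h2 := rpC_pow chi w p hp v
  rw [h, ENNReal.zero_rpow_of_pos hp0] at h2
  have := (add_eq_zero.1 h2.symm).1
  rw [ENNReal.rpow_eq_zero_iff_of_pos hp0] at this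
  exact hw0 v this

theorem sum_r_ne_zero (chi : V → Set V) (w : V → ℝ≥0∞) (p : ℝ) (hp : 1 < p) (v : V)
    (hdef : (∑' u : ↥(chi v), w u.1 ^ (-(conjExp p))) < ⊤) (hv : chi v ≠ ∅) :
    cpC chi w p v ≠ ⊤ ↔ (∑' u : ↥(chi v), rpC chi w p u.1 ^ (-(conjExp p))) ≠ 0 := by
  have hq := (conj_holder hp).symm.pos
  rw [cpC_eq chi w p hp v hdef hv, ENNReal.rpow_neg, ne_eq, ENNReal.inv_eq_top,
    ENNReal.rpow_eq_zero_iff_of_pos (by positivity)]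

theorem F_props (par : V → Option V) (hTree : IsDirectedTree par) (root : V)
    (hroot : IsRoot par root) (w : V → ℝ≥0∞) (p : ℝ) (hp : 1 < p)
    (hw : ∀ v, w v ≠ ⊤) (hw0 : ∀ v, w v ≠ 0)
    (hdef : ∀ v, (∑' u : ↥(children par v), w u.1 ^ (-(conjExp p))) < ⊤)
    (hfin : rpC (children par) w p root ≠ ⊤)
    (F : V → ℝ≥0∞) (hF1 : F root = 1) (hF : ∀ v y, par v = some y →
      F v = rpC (children par) w p v ^ (-(conjExp p)) /
        (∑' u : ↥(children par y), rpC (children par) w p u.1 ^ (-(conjExp p))) * F y) :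
    (∀ v, F v ≠ ⊤) ∧ (∀ v, F v ≠ 0 ↔ rpC (children par) w p v ≠ ⊤) ∧
    (∀ v, children par v ≠ ∅ → ∑' u : ↥(children par v), F u.1 = F v) ∧
    (∀ v, ∑' u : ↥(children par v), F u.1 ^ p * rpC (children par) w p u.1 ^ p =
      F v ^ p * cpC (children par) w p v ^ p) := by
  have hpq := conj_holder hp
  have hq := hpq.symm.pos
  have hp0 : 0 < p := by linarith
  have P1 : ∀ v, F v ≠ ⊤ := by
    refine tree_induct par hTree root hroot _ (by simp [hF1]) fun v y hy ih => ?_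
    rw [hF v y hy]
    refine ENNReal.mul_ne_top (ne_top_of_le_ne_top ENNReal.one_ne_top
      (ENNReal.div_le_of_le_mul ?_)) ih
    rw [one_mul]
    exact ENNReal.le_tsum (f := fun u : ↥(children par y) =>
      rpC (children par) w p u.1 ^ (-(conjExp p))) ⟨v, hy⟩
  have hz : ∀ v y, par v = some y → F y = 0 → F v = 0 := by
    intro v y hy h; rw [hF v y hy, h, mul_zero]
  have hrt : ∀ v, rpC (children par) w p v ^ (-(conjExp p)) = 0 ↔ rpC (children par) w p v = ⊤ := by
    intro v
    rw [ENNReal.rpow_neg, ENNReal.inv_eq_zero, ENNReal.rpow_eq_top_iff_of_pos hq]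
  have P2 : ∀ v, F v ≠ 0 ↔ rpC (children par) w p v ≠ ⊤ := by
    refine tree_induct par hTree root hroot _ (by simp [hF1, hfin]) fun v y hy ih => ?_
    constructor
    · intro h ht
      apply h
      rw [hF v y hy, (hrt v).2 ht]; simp
    · intro h
      have hy0 : children par y ≠ ∅ := Set.nonempty_iff_ne_empty.1 ⟨v, hy⟩
      have hv0 : rpC (children par) w p v ^ (-(conjExp p)) ≠ 0 := fun h' => h ((hrt v).1 h')
      have hS0 : (∑' u : ↥(children par y), rpC (children par) w p u.1 ^ (-(conjExp p))) ≠ 0 := by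
        intro h'
        rw [ENNReal.tsum_eq_zero] at h'
        exact hv0 (h' ⟨v, hy⟩)
      have hFy : F y ≠ 0 := ih.2 ((rpC_ne_top_iff _ w p hp hw y).2
        ((sum_r_ne_zero _ w p hp y (hdef y) hy0).2 hS0))
      rw [hF v y hy]
      exact mul_ne_zero (ENNReal.div_ne_zero.2 ⟨hv0, sum_r_ne_top _ w p hp y (hdef y)⟩) hFy
  refine ⟨P1, P2, ?_, ?_⟩
  · intro v hv
    by_cases h0 : F v = 0
    · rw [h0, ENNReal.tsum_eq_zero]
      exact fun u => hz u.1 v u.2 h0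
    · have hS0 := (sum_r_ne_zero _ w p hp v (hdef v) hv).1
        ((rpC_ne_top_iff _ w p hp hw v).1 ((P2 v).1 h0))
      have hSt := sum_r_ne_top _ w p hp v (hdef v)
      have : ∀ u : ↥(children par v), F u.1 = _ := fun u => hF u.1 v u.2
      simp_rw [this]
      rw [ENNReal.tsum_mul_right]
      simp_rw [div_eq_mul_inv]
      rw [ENNReal.tsum_mul_right, ENNReal.mul_inv_cancel hS0 hSt, one_mul]
  · intro v
    by_cases h0 : F v = 0
    · rw [h0, ENNReal.zero_rpow_of_pos hp0, zero_mul, ENNReal.tsum_eq_zero]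
      intro u
      rw [hz u.1 v u.2 h0, ENNReal.zero_rpow_of_pos hp0, zero_mul]
    · by_cases hv : children par v = ∅
      · rw [cpC_leaf _ w p v hv, ENNReal.zero_rpow_of_pos hp0, mul_zero, ENNReal.tsum_eq_zero]
        intro u
        have h9 : ∀ z, z ∈ children par v → False := fun z hz' => by simp [hv] at hz'
        exact (h9 u.1 u.2).elim
      have hS0 := (sum_r_ne_zero _ w p hp v (hdef v) hv).1
        ((rpC_ne_top_iff _ w p hp hw v).1 ((P2 v).1 h0))
      have hSt := sum_r_ne_top _ w p hp v (hdef v)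
      rw [cpC_eq _ w p hp v (hdef v) hv]
      have hF' : ∀ u : ↥(children par v), F u.1 = _ := fun u => hF u.1 v u.2
      set S := ∑' u : ↥(children par v), rpC (children par) w p u.1 ^ (-(conjExp p)) with hS
      have key : ∀ u : ↥(children par v), F u.1 ^ p * rpC (children par) w p u.1 ^ p =
          F v ^ p * S ^ (-p) * rpC (children par) w p u.1 ^ (-(conjExp p)) := by
        intro u
        by_cases hu : rpC (children par) w p u.1 = ⊤
        · have : F u.1 = 0 := by
            by_contra h; exact (P2 u.1).1 h hu
          rw [this, (hrt _).2 hu, ENNReal.zero_rpow_of_pos hp0, zero_mul, mul_zero]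
        · have hu0 := rpC_ne_zero (children par) w p hp hw0 u.1
          rw [hF' u, ENNReal.mul_rpow_of_nonneg _ _ hp0.le, div_eq_mul_inv,
            ENNReal.mul_rpow_of_nonneg _ _ hp0.le, ENNReal.inv_rpow, ← ENNReal.rpow_neg,
            ← ENNReal.rpow_mul]
          have : rpC (children par) w p u.1 ^ (-(conjExp p)) =
              rpC (children par) w p u.1 ^ (-(conjExp p) * p) * rpC (children par) w p u.1 ^ p := by
            rw [← ENNReal.rpow_add _ _ hu0 hu]
            congr 1
            have := hpq.mul_eq_add
            linarith
          rw [this]; ring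
      simp_rw [key]
      rw [ENNReal.tsum_mul_left, ← hS, mul_assoc]
      congr 1
      have h1 : S ^ (-p) * S = S ^ (-p + 1) := by
        rw [ENNReal.rpow_add _ _ hS0 hSt, ENNReal.rpow_one]
      rw [h1, ← ENNReal.rpow_mul]
      congr 1
      have := hpq.div_conj_eq_sub_one
      linear_combination this

theorem F_energy (par : V → Option V) (hTree : IsDirectedTree par) (root : V)
    (hroot : IsRoot par root) (w : V → ℝ≥0∞) (p : ℝ) (hp : 1 < p)
    (F : V → ℝ≥0∞) (hF1 : F root = 1)
    (hE : ∀ v, ∑' u : ↥(children par v), F u.1 ^ p * rpC (children par) w p u.1 ^ p =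
      F v ^ p * cpC (children par) w p v ^ p) :
    ∑' x : ↥{v : V | v ≠ root}, (F x.1 * w x.1) ^ p ≤ cpC (children par) w p root ^ p := by
  have hp0 : 0 < p := by linarith
  rw [iSup_enSum par hTree root hroot (fun u => (F u * w u) ^ p)]
  have : ∀ m v, enSum par (fun u => (F u * w u) ^ p) m v ≤
      F v ^ p * cpC (children par) w p v ^ p := by
    intro m
    induction m with
    | zero => intro v; simp [enSum]
    | succ m ih =>
      intro v
      rw [enSum_succ, ← hE]
      refine ENNReal.tsum_le_tsum fun u => ?_
      rw [rpC_pow _ w p hp, mul_add, ENNReal.mul_rpow_of_nonneg _ _ hp0.le]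
      gcongr
      exact ih u.1
  refine iSup_le fun m => ?_
  have := this m root
  rwa [hF1, ENNReal.one_rpow, one_mul] at this

theorem strict_real {𝕜 : Type*} [RCLike 𝕜] (p : ℝ) (hp : 1 < p) (a b : 𝕜) (hab : a ≠ b) :
    2 * ‖(a + b) / 2‖ ^ p < ‖a‖ ^ p + ‖b‖ ^ p := by
  have hp0 : 0 < p := by linarith
  have h2 : ‖(a + b) / 2‖ = ‖a + b‖ / 2 := by rw [norm_div]; simp
  rw [h2]
  have htri := norm_add_le a b
  by_cases hn : ‖a‖ = ‖b‖
  · have hlt : ‖a + b‖ / 2 < ‖a‖ := by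
      have : ‖a + b‖ ≠ ‖a‖ + ‖b‖ := fun h => hab (eq_of_norm_eq_of_norm_add_eq hn h)
      have := lt_of_le_of_ne htri this
      linarith
    have := Real.rpow_lt_rpow (by positivity) hlt hp0
    rw [← hn]; linarith
  · have h3 := (strictConvexOn_rpow hp).2 (Set.mem_Ici.2 (norm_nonneg a))
      (Set.mem_Ici.2 (norm_nonneg b)) hn (by norm_num : (0:ℝ) < 1 / 2) (by norm_num : (0:ℝ) < 1 / 2)
      (by norm_num)
    simp only [smul_eq_mul] at h3
    have h4 : (‖a + b‖ / 2) ^ p ≤ (1 / 2 * ‖a‖ + 1 / 2 * ‖b‖) ^ p :=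
      Real.rpow_le_rpow (by positivity) (by linarith) hp0.le
    linarith

theorem strict_enn {𝕜 : Type*} [RCLike 𝕜] (p : ℝ) (hp : 1 < p) (a b : 𝕜) (hab : a ≠ b)
    (w : ℝ≥0∞) (hw : w ≠ ⊤) (hw0 : w ≠ 0) :
    2 * ((‖(a + b) / 2‖₊ : ℝ≥0∞) * w) ^ p < ((‖a‖₊ : ℝ≥0∞) * w) ^ p + ((‖b‖₊ : ℝ≥0∞) * w) ^ p := by
  have hp0 : 0 < p := by linarith
  lift w to ℝ≥0 using hw
  have hw1 : 0 < w := by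
    rw [pos_iff_ne_zero]; exact_mod_cast hw0
  simp only [← ENNReal.coe_mul, ← ENNReal.coe_rpow_of_nonneg _ hp0.le]
  have h : 2 * ‖(a + b) / 2‖₊ ^ p < ‖a‖₊ ^ p + ‖b‖₊ ^ p := by
    have := strict_real p hp a b hab
    exact_mod_cast this
  have h' : 2 * (‖(a + b) / 2‖₊ * w) ^ p < (‖a‖₊ * w) ^ p + (‖b‖₊ * w) ^ p := by
    rw [NNReal.mul_rpow, NNReal.mul_rpow, NNReal.mul_rpow, ← add_mul, ← mul_assoc]
    exact mul_lt_mul_of_pos_right h (NNReal.rpow_pos hw1)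
  exact_mod_cast h'

theorem tsum_strict {ι : Type*} (A B M : ι → ℝ≥0∞) (C : ℝ≥0∞) (hC : C ≠ ⊤)
    (hA : ∑' x, A x = C) (hB : ∑' x, B x = C) (hM : C ≤ ∑' x, M x)
    (hle : ∀ x, 2 * M x ≤ A x + B x) (x : ι) (hx : 2 * M x < A x + B x) : False := by
  have hsum : ∑' x, (A x + B x) = C + C := by rw [ENNReal.tsum_add, hA, hB]
  have hfin : ∑' x, 2 * M x ≠ ⊤ := by
    refine ne_top_of_le_ne_top ?_ (ENNReal.tsum_le_tsum hle)
    rw [hsum]; exact ENNReal.add_ne_top.2 ⟨hC, hC⟩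
  have h := ENNReal.tsum_lt_tsum hfin hle hx
  rw [hsum, ENNReal.tsum_mul_left, ← two_mul] at h
  exact absurd h (not_lt.2 (by gcongr))

theorem unique_min {𝕜 : Type*} [RCLike 𝕜] (p : ℝ) (hp : 1 < p) (S : Set V) (f g : V → 𝕜)
    (w : V → ℝ≥0∞) (hw : ∀ v, w v ≠ ⊤) (hw0 : ∀ v, w v ≠ 0) (C : ℝ≥0∞) (hC : C ≠ ⊤)
    (hf : ∑' x : ↥S, ((‖f x.1‖₊ : ℝ≥0∞) * w x.1) ^ p = C)
    (hg : ∑' x : ↥S, ((‖g x.1‖₊ : ℝ≥0∞) * w x.1) ^ p = C)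
    (hm : C ≤ ∑' x : ↥S, ((‖(f x.1 + g x.1) / 2‖₊ : ℝ≥0∞) * w x.1) ^ p) :
    ∀ x ∈ S, f x = g x := by
  intro x hx
  by_contra hne
  have hle : ∀ x : ↥S, 2 * ((‖(f x.1 + g x.1) / 2‖₊ : ℝ≥0∞) * w x.1) ^ p ≤
      ((‖f x.1‖₊ : ℝ≥0∞) * w x.1) ^ p + ((‖g x.1‖₊ : ℝ≥0∞) * w x.1) ^ p := by
    intro x
    by_cases h : f x.1 = g x.1
    · rw [h, add_self_div_two, two_mul]
    · exact (strict_enn p hp _ _ h _ (hw _) (hw0 _)).le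
  exact tsum_strict _ _ _ C hC hf hg hm hle ⟨x, hx⟩
    (strict_enn p hp _ _ hne _ (hw _) (hw0 _))

theorem binv_le {𝕜 : Type*} [RCLike 𝕜] (chi : V → Set V) (g : V → 𝕜) (hg : BackwardInv chi g) (v : V)
    (hv : chi v ≠ ∅) : (‖g v‖₊ : ℝ≥0∞) ≤ ∑' u : ↥(chi v), (‖g u.1‖₊ : ℝ≥0∞) := by
  by_cases ht : ∑' u : ↥(chi v), (‖g u.1‖₊ : ℝ≥0∞) = ⊤
  · rw [ht]; exact le_top
  have h := hg v hv
  have hs : Summable fun u : ↥(chi v) => ‖g u.1‖₊ := ENNReal.tsum_coe_ne_top_iff_summable.1 ht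
  rw [← h.tsum_eq, ← ENNReal.coe_tsum hs, ENNReal.coe_le_coe]
  exact nnnorm_tsum_le hs

end Aux

/-- Theorem 6.6 / `t-charpinv`: on an arbitrary rooted tree, if the
unweighted backward shift is defined on `ℓ^p(V,μ)` (`1 < p < ∞`), the infimum of the
norm over backward invariant sequences with value `1` at the root equals `r_p` (resp.
`c_p` omitting the root), and when finite it is attained by a unique sequence, given by
the explicit formula (stated in its equivalent recursive form). -/
theorem statement7
    {𝕜 : Type*} [RCLike 𝕜] {V : Type*} (par : V → Option V) (hTree : IsDirectedTree par)
    (root : V) (hroot : IsRoot par root) (μ : V → 𝕜) (hμ : ∀ v : V, μ v ≠ 0)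
    (p : ℝ) (hp : 1 < p)
    (hdef : ∀ v : V, (∑' u : ↥(children par v), nw μ u.1 ^ (-(conjExp p))) < ⊤) :
    -- (a)
    ((⨅ g ∈ {g : V → 𝕜 | BackwardInv (children par) g ∧ g root = 1},
        lpSumOn (nw μ) p Set.univ g) = rpC (children par) (nw μ) p root ∧
      (⨅ g ∈ {g : V → 𝕜 | BackwardInv (children par) g ∧ g root = 1},
        lpSumOn (nw μ) p {v : V | v ≠ root} g) = cpC (children par) (nw μ) p root) ∧
    -- (b)
    (rpC (children par) (nw μ) p root < ⊤ →
      ∃ f : V → 𝕜,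
        (BackwardInv (children par) f ∧ f root = 1 ∧
          lpSumOn (nw μ) p Set.univ f = rpC (children par) (nw μ) p root ∧
          lpSumOn (nw μ) p {v : V | v ≠ root} f = cpC (children par) (nw μ) p root ∧
          (∀ v w : V, par v = some w →
            (rpC (children par) (nw μ) p v = ⊤ → f v = 0) ∧
            (rpC (children par) (nw μ) p v < ⊤ →
              f v = (((rpC (children par) (nw μ) p v ^ (-(conjExp p)) /
                    ∑' u : ↥(children par w),
                      rpC (children par) (nw μ) p u.1 ^ (-(conjExp p))).toReal : 𝕜)) * f w)) ∧
          ∀ v : V, rpC (children par) (nw μ) p v < ⊤ → ∃ r : ℝ, 0 < r ∧ f v = (r : 𝕜)) ∧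
        ∀ g : V → 𝕜, BackwardInv (children par) g → g root = 1 →
          (lpSumOn (nw μ) p Set.univ g = rpC (children par) (nw μ) p root ∨
            lpSumOn (nw μ) p {v : V | v ≠ root} g = cpC (children par) (nw μ) p root) →
          g = f) := by
  have hp0 : 0 < p := by linarith
  have hw : ∀ v, nw μ v ≠ ⊤ := fun v => ENNReal.coe_ne_top
  have hw0 : ∀ v, nw μ v ≠ 0 := fun v => by simp [nw, hμ v]
  -- lower bounds
  have hlowc : ∀ g : V → 𝕜, BackwardInv (children par) g → g root = 1 →
      cpC (children par) (nw μ) p root ^ p ≤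
        ∑' x : ↥{v : V | v ≠ root}, ((‖g x.1‖₊ : ℝ≥0∞) * nw μ x.1) ^ p := by
    intro g hg h1
    exact lower_root par hTree root hroot (nw μ) p hp hw hw0 hdef (fun v => (‖g v‖₊ : ℝ≥0∞))
      (fun v hv => binv_le _ g hg v hv) (by simp [h1])
  have hsplit : ∀ g : V → 𝕜, g root = 1 →
      ∑' x : ↥(Set.univ : Set V), ((‖g x.1‖₊ : ℝ≥0∞) * nw μ x.1) ^ p = nw μ root ^ p +
        ∑' x : ↥{v : V | v ≠ root}, ((‖g x.1‖₊ : ℝ≥0∞) * nw μ x.1) ^ p := by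
    intro g h1
    rw [tsum_univ_split root (fun x => ((‖g x‖₊ : ℝ≥0∞) * nw μ x) ^ p)]
    simp [h1]
  have hroot1 : ∀ x : ℝ≥0∞, (x ^ p) ^ (1 / p) = x := fun x => by
    rw [← ENNReal.rpow_mul, mul_one_div_cancel hp0.ne', ENNReal.rpow_one]
  have hroot2 : ∀ x : ℝ≥0∞, (x ^ (1 / p)) ^ p = x := fun x => by
    rw [← ENNReal.rpow_mul, one_div_mul_cancel hp0.ne', ENNReal.rpow_one]
  have hlc : ∀ g : V → 𝕜, BackwardInv (children par) g → g root = 1 →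
      cpC (children par) (nw μ) p root ≤ lpSumOn (nw μ) p {v : V | v ≠ root} g := by
    intro g hg h1
    rw [lpSumOn, ← hroot1 (cpC (children par) (nw μ) p root)]
    exact ENNReal.rpow_le_rpow (hlowc g hg h1) (by positivity)
  have hlr : ∀ g : V → 𝕜, BackwardInv (children par) g → g root = 1 →
      rpC (children par) (nw μ) p root ≤ lpSumOn (nw μ) p Set.univ g := by
    intro g hg h1
    rw [lpSumOn, rpC, hsplit g h1]
    refine ENNReal.rpow_le_rpow ?_ (by positivity)
    gcongr
    exact hlowc g hg h1
  have hB : rpC (children par) (nw μ) p root < ⊤ →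
      ∃ f : V → 𝕜,
        (BackwardInv (children par) f ∧ f root = 1 ∧
          lpSumOn (nw μ) p Set.univ f = rpC (children par) (nw μ) p root ∧
          lpSumOn (nw μ) p {v : V | v ≠ root} f = cpC (children par) (nw μ) p root ∧
          (∀ v w : V, par v = some w →
            (rpC (children par) (nw μ) p v = ⊤ → f v = 0) ∧
            (rpC (children par) (nw μ) p v < ⊤ →
              f v = (((rpC (children par) (nw μ) p v ^ (-(conjExp p)) /
                    ∑' u : ↥(children par w),
                      rpC (children par) (nw μ) p u.1 ^ (-(conjExp p))).toReal : 𝕜)) * f w)) ∧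
          ∀ v : V, rpC (children par) (nw μ) p v < ⊤ → ∃ r : ℝ, 0 < r ∧ f v = (r : 𝕜)) ∧
        ∀ g : V → 𝕜, BackwardInv (children par) g → g root = 1 →
          (lpSumOn (nw μ) p Set.univ g = rpC (children par) (nw μ) p root ∨
            lpSumOn (nw μ) p {v : V | v ≠ root} g = cpC (children par) (nw μ) p root) →
          g = f := by
    intro hfin
    obtain ⟨F, hF1, hF⟩ := exists_F par hTree root hroot (nw μ) p
    obtain ⟨P1, P2, P3, P4⟩ := F_props par hTree root hroot (nw μ) p hp hw hw0 hdef hfin.ne F hF1 hF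
    have hen := F_energy par hTree root hroot (nw μ) p hp F hF1 P4
    have hcfin : cpC (children par) (nw μ) p root ≠ ⊤ :=
      (rpC_ne_top_iff _ _ p hp hw root).1 hfin.ne
    have hnorm : ∀ v, (‖((F v).toReal : 𝕜)‖₊ : ℝ≥0∞) = F v := by
      intro v
      have : ‖((F v).toReal : 𝕜)‖₊ = (F v).toNNReal := by
        apply NNReal.coe_injective
        simp [ENNReal.toReal]
      rw [this, ENNReal.coe_toNNReal (P1 v)]
    have hf1 : ((F root).toReal : 𝕜) = 1 := by simp [hF1]
    have hfB : BackwardInv (children par) (fun v => ((F v).toReal : 𝕜)) := by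
      intro v hv
      have h1 : ∑' u : ↥(children par v), F u.1 ≠ ⊤ := by rw [P3 v hv]; exact P1 v
      have h2 : HasSum (fun u : ↥(children par v) => (F u.1).toReal) (F v).toReal := by
        have h3 := ENNReal.hasSum_toReal h1
        rwa [← ENNReal.tsum_toReal_eq (fun u : ↥(children par v) => P1 u.1), P3 v hv] at h3
      exact (RCLike.hasSum_ofReal 𝕜).2 h2
    have hcp : ∑' x : ↥{v : V | v ≠ root}, ((‖((F x.1).toReal : 𝕜)‖₊ : ℝ≥0∞) * nw μ x.1) ^ p =
        cpC (children par) (nw μ) p root ^ p := by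
      refine le_antisymm ?_ (hlowc (fun v => ((F v).toReal : 𝕜)) hfB hf1)
      simp_rw [hnorm]
      exact hen
    refine ⟨fun v => ((F v).toReal : 𝕜), ⟨hfB, hf1, ?_, ?_, ?_, ?_⟩, ?_⟩
    · rw [lpSumOn, rpC, hsplit (fun v => ((F v).toReal : 𝕜)) hf1, hcp]
    · rw [lpSumOn, hcp, hroot1]
    · intro v y hy
      constructor
      · intro ht
        have : F v = 0 := by
          by_contra h; exact (P2 v).1 h ht
        simp [this]
      · intro _
        simp only
        rw [hF v y hy, ENNReal.toReal_mul, RCLike.ofReal_mul]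
    · intro v hv
      exact ⟨(F v).toReal, ENNReal.toReal_pos ((P2 v).2 hv.ne) (P1 v), rfl⟩
    · intro g hg hg1 hor
      have hgc : ∑' x : ↥{v : V | v ≠ root}, ((‖g x.1‖₊ : ℝ≥0∞) * nw μ x.1) ^ p =
          cpC (children par) (nw μ) p root ^ p := by
        rcases hor with h | h
        · have h2 := congrArg (fun x => x ^ p) h
          simp only [lpSumOn, hroot2, rpC_pow _ _ p hp] at h2
          rw [hsplit g hg1] at h2
          exact (ENNReal.add_right_inj (ENNReal.rpow_ne_top_of_nonneg hp0.le (hw root))).1 h2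
        · have h2 := congrArg (fun x => x ^ p) h
          simpa only [lpSumOn, hroot2] using h2
      have hmB : BackwardInv (children par) (fun v => (g v + ((F v).toReal : 𝕜)) / 2) := by
        intro v hv
        exact ((hg v hv).add (hfB v hv)).div_const 2
      have hm := hlowc _ hmB (by simp only [hg1, hf1]; norm_num)
      have := unique_min p hp {v : V | v ≠ root} g (fun v => ((F v).toReal : 𝕜)) (nw μ) hw hw0 _
        (ENNReal.rpow_ne_top_of_nonneg hp0.le hcfin) hgc hcp hm
      funext v
      by_cases hv : v = root
      · rw [hv, hg1]; exact hf1.symm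
      · exact this v hv
  refine ⟨⟨?_, ?_⟩, hB⟩
  · refine le_antisymm ?_ (le_iInf₂ fun g hg => hlr g hg.1 hg.2)
    by_cases ht : rpC (children par) (nw μ) p root = ⊤
    · rw [ht]; exact le_top
    · obtain ⟨f, ⟨h1, h2, h3, _⟩, _⟩ := hB (lt_top_iff_ne_top.2 ht)
      exact (iInf₂_le f ⟨h1, h2⟩).trans_eq h3
  · refine le_antisymm ?_ (le_iInf₂ fun g hg => hlc g hg.1 hg.2)
    by_cases ht : cpC (children par) (nw μ) p root = ⊤
    · rw [ht]; exact le_top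
    · obtain ⟨f, ⟨h1, h2, _, h3, _⟩, _⟩ := hB (lt_top_iff_ne_top.2 ((rpC_ne_top_iff _ _ p hp hw root).2 ht))
      exact (iInf₂_le f ⟨h1, h2⟩).trans_eq h3
end PaperTree
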